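/- Let V be a subspace of ℂ^l (viewed as degree-one part of the Orlik–Solomon algebra of an arrangement in ℂP^n) spanned by rows of a matrix M with columns v_1,…,v_l. If V is n-isotropic (the wedge of any n elements of V vanishes in the OS algebra), then for every complete flag S_n ⊇ ⋯ ⊇ S_1 in the intersection lattice, the decorating vectors v_{S_k} := Σ_{H_i ⊇ S_k} v_i span a subspace of ℂ^n of dimension strictly less than n; conversely if this flag condition holds then V is n-isotropic. -/

import Mathlib

noncomputable section
open ExteriorAlgebra

/-- The canonical degree-one generator `x_i` of the exterior algebra of `ℂ^l`. -/
def xGen (l : ℕ) (i : Fin l) : ExteriorAlgebra ℂ (Fin l → ℂ) :=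
  ι ℂ (Pi.single i (1 : ℂ))

/-- The wedge monomial `x_{f 0} ∧ ⋯ ∧ x_{f (m-1)}`. -/
def wedgeMon (l m : ℕ) (f : Fin m → Fin l) : ExteriorAlgebra ℂ (Fin l → ℂ) :=
  (List.ofFn fun k => xGen l (f k)).prod

/-- The Orlik–Solomon boundary `∂(x_{f 0} ∧ ⋯ ∧ x_{f m})`. -/
def osBoundary (l m : ℕ) (f : Fin (m + 1) → Fin l) : ExteriorAlgebra ℂ (Fin l → ℂ) :=
  ∑ j : Fin (m + 1), ((-1 : ℂ) ^ (j : ℕ)) • wedgeMon l m (f ∘ j.succAbove)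

/-- The defining relations of the Orlik–Solomon algebra of the (projective, modelled as
central in `ℂ^{n+1}`) arrangement given by the linear forms `α`: boundaries of dependent
monomials, and monomials over families with empty (projective) intersection. -/
def osRel (n l : ℕ) (α : Fin l → ((Fin (n + 1) → ℂ) →ₗ[ℂ] ℂ)) :
    ExteriorAlgebra ℂ (Fin l → ℂ) → ExteriorAlgebra ℂ (Fin l → ℂ) → Prop :=
  fun p q =>
    ((∃ (m : ℕ) (f : Fin (m + 1) → Fin l), ¬ LinearIndependent ℂ (fun k => α (f k)) ∧
        p = osBoundary l m f) ∨
     (∃ (m : ℕ) (f : Fin m → Fin l), (⨅ k, LinearMap.ker (α (f k))) = ⊥ ∧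
        p = wedgeMon l m f)) ∧ q = 0

/-- The Orlik–Solomon algebra: the exterior algebra modulo the two-sided ideal generated
by the Orlik–Solomon relations. -/
def OSAlg (n l : ℕ) (α : Fin l → ((Fin (n + 1) → ℂ) →ₗ[ℂ] ℂ)) : Type :=
  RingQuot (osRel n l α)

instance (n l : ℕ) (α : Fin l → ((Fin (n + 1) → ℂ) →ₗ[ℂ] ℂ)) : Ring (OSAlg n l α) :=
  inferInstanceAs (Ring (RingQuot (osRel n l α)))

instance (n l : ℕ) (α : Fin l → ((Fin (n + 1) → ℂ) →ₗ[ℂ] ℂ)) : Algebra ℂ (OSAlg n l α) :=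
  inferInstanceAs (Algebra ℂ (RingQuot (osRel n l α)))

/-- The projection from the exterior algebra onto the Orlik–Solomon algebra. -/
def osProj (n l : ℕ) (α : Fin l → ((Fin (n + 1) → ℂ) →ₗ[ℂ] ℂ)) :
    ExteriorAlgebra ℂ (Fin l → ℂ) →ₐ[ℂ] OSAlg n l α :=
  RingQuot.mkAlgHom ℂ (osRel n l α)

/-- The flat determined by a set of hyperplane indices. -/
def arrFlat (n l : ℕ) (α : Fin l → ((Fin (n + 1) → ℂ) →ₗ[ℂ] ℂ)) (S : Finset (Fin l)) :
    Submodule ℂ (Fin (n + 1) → ℂ) :=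
  ⨅ i ∈ S, LinearMap.ker (α i)

/-- The decoration `v_P = Σ_{H_i ⊇ P} v_i` of a flat `P`, where `v_j` is the `j`-th
column of the coefficient matrix `M`. -/
def flatVec (n l : ℕ) (α : Fin l → ((Fin (n + 1) → ℂ) →ₗ[ℂ] ℂ))
    (M : Matrix (Fin n) (Fin l) ℂ) (P : Submodule ℂ (Fin (n + 1) → ℂ)) : Fin n → ℂ :=
  open Classical in
  ∑ i ∈ Finset.univ.filter (fun i => P ≤ LinearMap.ker (α i)), (fun r => M r i)

section Helpers

theorem wedgeMon_eq (l m : ℕ) (f : Fin m → Fin l) :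
    wedgeMon l m f = ιMulti ℂ m (fun k => (Pi.single (f k) (1 : ℂ) : Fin l → ℂ)) := by
  rw [ιMulti_apply]; rfl

/-- The boundary of a family with a repetition vanishes. -/
theorem boundary_repeat {T V : Type*} [AddCommGroup V] [Module ℂ V] (y : T → V) (m : ℕ)
    (τ : Fin (m + 1) → T) (a b : Fin (m + 1)) (hab : a ≠ b) (h : τ a = τ b) :
    ∑ j : Fin (m + 1), ((-1 : ℂ) ^ (j : ℕ)) • ιMulti ℂ m (fun k => y (τ (j.succAbove k))) = 0 := by
  classical
  let lam : (T →₀ ℂ) →ₗ[ℂ] ℂ := Finsupp.linearCombination ℂ (fun _ => (1 : ℂ))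
  let g : (T →₀ ℂ) [⋀^Fin m]→ₗ[ℂ] ExteriorAlgebra ℂ V :=
    (ιMulti ℂ m).compLinearMap (Finsupp.linearCombination ℂ y)
  let f : (T →₀ ℂ) →ₗ[ℂ] ((T →₀ ℂ) [⋀^Fin m]→ₗ[ℂ] ExteriorAlgebra ℂ V) := lam.smulRight g
  have h0 := (AlternatingMap.alternatizeUncurryFin f).map_eq_zero_of_eq
    (fun k => Finsupp.single (τ k) (1 : ℂ)) (i := a) (j := b) (by simp [h]) hab
  rw [AlternatingMap.alternatizeUncurryFin_apply] at h0
  rw [← h0]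
  refine Finset.sum_congr rfl fun j _ => ?_
  have : f (Finsupp.single (τ j) (1 : ℂ))
      (j.removeNth (fun k => (Finsupp.single (τ k) (1 : ℂ) : T →₀ ℂ))) =
      ιMulti ℂ m (fun k => y (τ (j.succAbove k))) := by
    simp [f, g, lam, Fin.removeNth]
  rw [this]
  rcases Nat.even_or_odd (j : ℕ) with hj | hj <;> simp [hj.neg_one_pow]

/-- Triangular independence criterion. -/
theorem linInd_of_triangular {W I : Type*} [AddCommGroup W] [Module ℂ W] [Fintype I]
    (a : I → W →ₗ[ℂ] ℂ) (t : I → ℕ) (ht : Function.Injective t) (G : ℕ → Submodule ℂ W)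
    (h1 : ∀ i, ¬ G (t i) ≤ LinearMap.ker (a i))
    (h2 : ∀ i j, t i < t j → G (t i) ≤ LinearMap.ker (a j)) :
    LinearIndependent ℂ a := by
  classical
  rw [Fintype.linearIndependent_iff]
  intro g hg
  by_contra hne
  push Not at hne
  obtain ⟨i0, hi0⟩ := hne
  obtain ⟨i, hi, hmin⟩ := Finset.exists_min_image (Finset.univ.filter fun i => g i ≠ 0) t
    ⟨i0, by simpa using hi0⟩
  apply h1 i
  intro x hx
  have h3 := LinearMap.congr_fun hg x
  rw [LinearMap.sum_apply, Finset.sum_eq_single i] at h3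
  · simp only [LinearMap.smul_apply, smul_eq_mul, LinearMap.zero_apply, mul_eq_zero] at h3
    rcases h3 with h3 | h3
    · simp [h3] at hi
    · exact h3
  · intro j _ hji
    by_cases hgj : g j = 0
    · simp [hgj]
    · have hle := hmin j (by simpa using hgj)
      have hlt : t i < t j := lt_of_le_of_ne hle (fun h => hji (ht h).symm)
      have := h2 i j hlt hx
      rw [LinearMap.mem_ker] at this
      simp [this]
  · simp

theorem forward_dir (n l : ℕ) (hn : 1 ≤ n)
    (α : Fin l → ((Fin (n + 1) → ℂ) →ₗ[ℂ] ℂ)) (hα : ∀ i, α i ≠ 0)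
    (M : Matrix (Fin n) (Fin l) ℂ)
    (h : osProj n l α ((List.ofFn fun i : Fin n => ι ℂ (M i)).prod) = 0)
    (F : Fin n → Submodule ℂ (Fin (n + 1) → ℂ))
    (hbot : F ⟨0, hn⟩ ≠ ⊥) (hmono : ∀ k k' : Fin n, k ≤ k' → F k ≤ F k') :
    Module.finrank ℂ (Submodule.span ℂ
          (Set.range fun k : Fin n => flatVec n l α M (F k))) < n := by
  classical
  let G : ℕ → Submodule ℂ (Fin (n + 1) → ℂ) := fun t => if h : t < n then F ⟨t, h⟩ else ⊤
  have hGmono : Monotone G := by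
    intro s t hst
    by_cases ht : t < n
    · simp only [G, ht, lt_of_le_of_lt hst ht, dif_pos]
      exact hmono _ _ hst
    · simp [G, ht]
  have hGn : G n = ⊤ := by simp [G]
  have hGk : ∀ k : Fin n, G k = F k := fun k => by simp [G]
  have hex : ∀ i, ∃ t, ¬ G t ≤ LinearMap.ker (α i) := fun i => ⟨n, by
    rw [hGn, top_le_iff, LinearMap.ker_eq_top]; exact hα i⟩
  let t : Fin l → ℕ := fun i => Nat.find (hex i)
  have ht1 : ∀ i, ¬ G (t i) ≤ LinearMap.ker (α i) := fun i => Nat.find_spec (hex i)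
  have ht2 : ∀ i s, s < t i → G s ≤ LinearMap.ker (α i) := fun i s hs =>
    not_not.1 (Nat.find_min (hex i) hs)
  have htk : ∀ i (k : Fin n), F k ≤ LinearMap.ker (α i) ↔ (k : ℕ) < t i := by
    intro i k
    rw [← hGk]
    refine ⟨fun hk => ?_, ht2 i k⟩
    by_contra hlt
    exact ht1 i ((hGmono (not_lt.1 hlt)).trans hk)
  let L : (Fin l → ℂ) →ₗ[ℂ] (Fin n → ℂ) := LinearMap.pi fun k =>
    ∑ i ∈ Finset.univ.filter (fun i => F k ≤ LinearMap.ker (α i)), LinearMap.proj i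
  let Y : ℕ → Fin n → ℂ := fun s k => if (k : ℕ) < s then 1 else 0
  have hLapp : ∀ w k, L w k =
      ∑ i ∈ Finset.univ.filter (fun i => F k ≤ LinearMap.ker (α i)), w i := by
    intro w k
    simp [L]
  have hL : ∀ i, L (Pi.single i 1) = Y (t i) := by
    intro i
    ext k
    rw [hLapp]
    simp [Y, Pi.single_apply, htk]
  have hmon : ∀ m (f : Fin m → Fin l),
      ExteriorAlgebra.map L (wedgeMon l m f) = ιMulti ℂ m (fun k => Y (t (f k))) := by
    intro m f
    rw [wedgeMon_eq, ExteriorAlgebra.map_apply_ιMulti]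
    congr 1
    ext1 k
    exact hL _
  have hrel : ∀ ⦃x y⦄, osRel n l α x y → ExteriorAlgebra.map L x = ExteriorAlgebra.map L y := by
    rintro x y ⟨h | h, rfl⟩
    · obtain ⟨m, f, hf, rfl⟩ := h
      have : ¬ Function.Injective (fun k => t (f k)) := fun hinj =>
        hf (linInd_of_triangular _ (fun k => t (f k)) hinj G (fun k => ht1 _)
          (fun i j hij => ht2 _ _ hij))
      rw [Function.Injective] at this
      push Not at this
      obtain ⟨a, b, hab, hne⟩ := this
      rw [map_zero, osBoundary, map_sum]
      simp only [map_smul, hmon, Function.comp_apply]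
      exact boundary_repeat Y m (fun k => t (f k)) a b hne hab
    · obtain ⟨m, f, hf, rfl⟩ := h
      rw [map_zero, hmon]
      by_cases hz : ∃ k, t (f k) = 0
      · obtain ⟨k, hk⟩ := hz
        refine (ιMulti ℂ m).map_coord_zero k ?_
        rw [hk]; ext; simp [Y]
      · exfalso
        push Not at hz
        apply hbot
        rw [← le_bot_iff, ← hf]
        refine le_iInf fun k => ?_
        rw [htk]
        exact Nat.pos_of_ne_zero (hz k)
  have h1 : ExteriorAlgebra.map L ((List.ofFn fun i : Fin n => ι ℂ (M i)).prod) = 0 := by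
    have := RingQuot.liftAlgHom_mkAlgHom_apply ℂ (ExteriorAlgebra.map L) hrel
      ((List.ofFn fun i : Fin n => ι ℂ (M i)).prod)
    rw [← this]
    have h' : RingQuot.mkAlgHom ℂ (osRel n l α)
      ((List.ofFn fun i : Fin n => ι ℂ (M i)).prod) = 0 := h
    rw [h', map_zero]
  replace h1 : ExteriorAlgebra.map L (ιMulti ℂ n (fun i => (M i : Fin l → ℂ))) = 0 := by
    rw [ιMulti_apply]; exact h1
  rw [ExteriorAlgebra.map_apply_ιMulti] at h1
  let D : ∀ i, (Fin n → ℂ) [⋀^Fin i]→ₗ[ℂ] ℂ := fun i =>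
    if hi : i = n then hi ▸ Matrix.detRowAlternating else 0
  have h2 := congrArg (liftAlternating D) h1
  rw [map_zero, liftAlternating_apply_ιMulti] at h2
  have h3 : Matrix.det (fun r k => flatVec n l α M (F k) r) = 0 := by
    simp only [D, dif_pos] at h2
    rw [← h2]
    change _ = Matrix.det _
    congr 1
    ext r k
    simp [flatVec, L, Finset.sum_apply]
  rw [← not_le]
  intro hle
  have hli : LinearIndependent ℂ (fun k : Fin n => flatVec n l α M (F k)) := by
    rw [linearIndependent_iff_card_le_finrank_span]
    simpa [Set.finrank] using hle
  have := (Matrix.linearIndependent_rows_iff_isUnit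
    (A := (Matrix.of fun k => flatVec n l α M (F k)))).1 hli
  rw [Matrix.isUnit_iff_isUnit_det, ← Matrix.det_transpose] at this
  refine this.ne_zero ?_
  exact h3

section Back
variable {n l : ℕ}

/-- The intersection of all hyperplanes in the family. -/
def famK (α : Fin l → ((Fin (n + 1) → ℂ) →ₗ[ℂ] ℂ)) {m : ℕ} (f : Fin m → Fin l) :
    Submodule ℂ (Fin (n + 1) → ℂ) := ⨅ k, LinearMap.ker (α (f k))

/-- The flag attached to a family. -/
def famFlag (α : Fin l → ((Fin (n + 1) → ℂ) →ₗ[ℂ] ℂ)) {m : ℕ} (f : Fin m → Fin l) (k : Fin m) :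
    Submodule ℂ (Fin (n + 1) → ℂ) := ⨅ j, ⨅ (_ : k ≤ j), LinearMap.ker (α (f j))

/-- The strict version of the flag. -/
def famNext (α : Fin l → ((Fin (n + 1) → ℂ) →ₗ[ℂ] ℂ)) {m : ℕ} (f : Fin m → Fin l) (k : Fin m) :
    Submodule ℂ (Fin (n + 1) → ℂ) := ⨅ j, ⨅ (_ : k < j), LinearMap.ker (α (f j))

variable (α : Fin l → ((Fin (n + 1) → ℂ) →ₗ[ℂ] ℂ))

theorem mem_famFlag {m : ℕ} (f : Fin m → Fin l) (k : Fin m) (x) :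
    x ∈ famFlag α f k ↔ ∀ j, k ≤ j → α (f j) x = 0 := by
  simp [famFlag, Submodule.mem_iInf]

theorem mem_famNext {m : ℕ} (f : Fin m → Fin l) (k : Fin m) (x) :
    x ∈ famNext α f k ↔ ∀ j, k < j → α (f j) x = 0 := by
  simp [famNext, Submodule.mem_iInf]

theorem mem_famK {m : ℕ} (f : Fin m → Fin l) (x) :
    x ∈ famK α f ↔ ∀ j, α (f j) x = 0 := by
  simp [famK, Submodule.mem_iInf]

theorem famFlag_eq {m : ℕ} (f : Fin m → Fin l) (k : Fin m) :
    famFlag α f k = famNext α f k ⊓ LinearMap.ker (α (f k)) := by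
  ext x
  rw [Submodule.mem_inf, mem_famFlag, mem_famNext, LinearMap.mem_ker]
  refine ⟨fun h => ⟨fun j hj => h j hj.le, h k le_rfl⟩, fun h j hj => ?_⟩
  rcases hj.eq_or_lt with rfl | hj
  · exact h.2
  · exact h.1 j hj

theorem famNext_eq {m : ℕ} (f : Fin m → Fin l) (k : Fin m) :
    famNext α f k = ⨅ j, ⨅ (_ : k < j), famFlag α f j := by
  ext x
  simp only [Submodule.mem_iInf, mem_famFlag, mem_famNext]
  exact ⟨fun h j hj i hi => h i (hj.trans_le hi), fun h j hj => h j hj j le_rfl⟩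

theorem famFlag_cons {m : ℕ} (a : Fin l) (g : Fin m → Fin l) :
    famFlag α (Fin.cons a g : Fin (m + 1) → Fin l) =
      Fin.cons (famK α (Fin.cons a g : Fin (m + 1) → Fin l)) (famFlag α g) := by
  funext k
  ext x
  refine Fin.cases ?_ (fun k => ?_) k
  · rw [Fin.cons_zero, mem_famFlag, mem_famK]; simp
  · rw [Fin.cons_succ, mem_famFlag, mem_famFlag, Fin.forall_fin_succ]; simp

theorem famK_perm {m : ℕ} (f : Fin m → Fin l) (σ : Equiv.Perm (Fin m)) :
    famK α (f ∘ σ) = famK α f := by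
  ext x
  rw [mem_famK, mem_famK]
  exact ⟨fun h j => by simpa using h (σ.symm j), fun h j => h _⟩

theorem codim_one_aux {W : Type*} [AddCommGroup W] [Module ℂ W] (Y : Submodule ℂ W)
    (a b : W →ₗ[ℂ] ℂ) (h1 : Y ⊓ LinearMap.ker a ≤ LinearMap.ker b)
    (h2 : ¬ Y ≤ LinearMap.ker b) : Y ⊓ LinearMap.ker b = Y ⊓ LinearMap.ker a := by
  apply le_antisymm
  · rintro x ⟨hxY, hxb⟩
    refine ⟨hxY, ?_⟩
    obtain ⟨y, hy, hyb⟩ := SetLike.not_le_iff_exists.1 h2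
    simp only [LinearMap.mem_ker, SetLike.mem_coe] at *
    have hay : a y ≠ 0 := fun h => hyb (h1 ⟨hy, h⟩)
    have hz : x - (a x / a y) • y ∈ Y ⊓ LinearMap.ker a := by
      refine ⟨Y.sub_mem hxY (Y.smul_mem _ hy), ?_⟩
      simp [hay]
    have := h1 hz
    simp only [LinearMap.mem_ker, map_sub, hxb, map_smul, smul_eq_mul, zero_sub, neg_eq_zero,
      mul_eq_zero, hyb, or_false, div_eq_zero_iff, hay] at this
    exact this
  · exact le_inf inf_le_left h1

theorem linInd_iff {m : ℕ} (f : Fin m → Fin l) :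
    LinearIndependent ℂ (fun k => α (f k)) ↔
      ∀ k, ¬ famNext α f k ≤ LinearMap.ker (α (f k)) := by
  constructor
  · intro h k hk
    have h1 : α (f k) ∈ Submodule.span ℂ (Set.range fun j : {j // k < j} => α (f j)) := by
      apply mem_span_of_iInf_ker_le_ker
      refine le_trans ?_ hk
      intro x hx
      rw [mem_famNext]
      intro j hj
      rw [Submodule.mem_iInf] at hx
      exact hx ⟨j, hj⟩
    have h2 := h.notMem_span_image (s := {j | k < j}) (x := k) (by simp)
    apply h2
    convert h1 using 2
    ext y; simp
  · intro h
    refine linInd_of_triangular _ (fun k => (k : ℕ)) Fin.val_injective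
      (fun s => if hs : s < m then famNext α f ⟨s, hs⟩ else ⊤) ?_ ?_
    · intro k; simpa using h k
    · intro i j hij x hx
      simp only [Fin.is_lt, dif_pos] at hx
      rw [mem_famNext] at hx
      exact hx j hij

/-- The index set in position `k` of families with the same flag as `f`. -/
def famT {m : ℕ} (f : Fin m → Fin l) (k : Fin m) : Finset (Fin l) :=
  open Classical in
  Finset.univ.filter fun i => famFlag α f k ≤ LinearMap.ker (α i) ∧
    ¬ famNext α f k ≤ LinearMap.ker (α i)

theorem same_flag_iff {m : ℕ} (f0 f : Fin m → Fin l) :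
    (LinearIndependent ℂ (fun k => α (f k)) ∧ famFlag α f = famFlag α f0) ↔
      ∀ k, f k ∈ famT α f0 k := by
  constructor
  · rintro ⟨hi, hf⟩ k
    rw [linInd_iff] at hi
    have h1 : famNext α f k = famNext α f0 k := by rw [famNext_eq, famNext_eq, hf]
    simp only [famT, Finset.mem_filter, Finset.mem_univ, true_and]
    rw [← h1, ← hf]
    exact ⟨(famFlag_eq α f k).le.trans inf_le_right, hi k⟩
  · intro h
    simp only [famT, Finset.mem_filter, Finset.mem_univ, true_and] at h
    have key : ∀ d : ℕ, ∀ k : Fin m, m - (k : ℕ) = d → famFlag α f k = famFlag α f0 k := by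
      intro d
      induction d using Nat.strong_induction_on with
      | _ d ih =>
        intro k hk
        have h1 : famNext α f k = famNext α f0 k := by
          rw [famNext_eq, famNext_eq]
          refine iInf_congr fun j => iInf_congr fun hj => ?_
          exact ih (m - (j : ℕ)) (by have := j.2; have : (k : ℕ) < j := hj; omega) j rfl
        rw [famFlag_eq, famFlag_eq, h1]
        refine codim_one_aux _ _ _ ?_ (h k).2
        rw [← famFlag_eq]
        exact (h k).1
    have hf : famFlag α f = famFlag α f0 := funext fun k => key _ k rfl
    refine ⟨?_, hf⟩
    rw [linInd_iff]
    intro k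
    rw [famNext_eq, hf, ← famNext_eq]
    exact (h k).2

theorem finrank_famFlag (f : Fin n → Fin l) (h : LinearIndependent ℂ (fun k => α (f k)))
    (k : Fin n) : Module.finrank ℂ (famFlag α f k) = (k : ℕ) + 1 := by
  have h1 : LinearIndependent ℂ (fun j : {j : Fin n // k ≤ j} => α (f j)) :=
    h.comp _ Subtype.val_injective
  have h2 := finrank_span_eq_card h1
  have h3 := Subspace.finrank_add_finrank_dualCoannihilator_eq
    (Submodule.span ℂ (Set.range (fun j : {j : Fin n // k ≤ j} => α (f j))))
  have h4 : Submodule.dualCoannihilator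
    (Submodule.span ℂ (Set.range (fun j : {j : Fin n // k ≤ j} => α (f j)))) = famFlag α f k := by
    apply SetLike.coe_injective
    rw [Submodule.coe_dualCoannihilator_span]
    ext x
    simp [mem_famFlag]
  rw [h4, h2] at h3
  have h5 : Fintype.card {j : Fin n // k ≤ j} = n - k := by
    rw [Fintype.card_subtype]
    have : (Finset.univ.filter fun j => k ≤ j) = Finset.Ici k := by ext; simp
    rw [this, Fin.card_Ici]
  rw [h5] at h3
  simp only [Module.finrank_fintype_fun_eq_card, Fintype.card_fin] at h3
  have := k.2
  omega

theorem flatVec_sub {m : ℕ} (M : Matrix (Fin n) (Fin l) ℂ) (f : Fin m → Fin l) (k : Fin m) :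
    ∑ i ∈ famT α f k, (fun r => M r i) =
      flatVec n l α M (famFlag α f k) - flatVec n l α M (famNext α f k) := by
  classical
  rw [eq_sub_iff_add_eq, flatVec, flatVec, ← Finset.sum_union]
  · refine Finset.sum_congr ?_ fun _ _ => rfl
    have : famFlag α f k ≤ famNext α f k := (famFlag_eq α f k).le.trans inf_le_left
    ext i
    simp only [famT, Finset.mem_union, Finset.mem_filter, Finset.mem_univ, true_and]
    constructor
    · rintro (h | h)
      · exact h.1
      · exact this.trans h
    · intro h
      by_cases h' : famNext α f k ≤ LinearMap.ker (α i)
      · exact Or.inr h'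
      · exact Or.inl ⟨h, h'⟩
  · rw [Finset.disjoint_left]
    intro i hi hi'
    simp only [famT, Finset.mem_filter, Finset.mem_univ, true_and] at hi hi'
    exact hi.2 hi'

/-- The flag condition gives vanishing of the sums of minors. -/
theorem flag_sum_zero (hα : ∀ i, α i ≠ 0) (M : Matrix (Fin n) (Fin l) ℂ)
    (H : ∀ F : Fin n → Finset (Fin l),
        (∀ k : Fin n, Module.finrank ℂ (arrFlat n l α (F k)) = (k : ℕ) + 1) →
        (∀ k k' : Fin n, k ≤ k' → arrFlat n l α (F k) ≤ arrFlat n l α (F k')) →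
        Module.finrank ℂ (Submodule.span ℂ
          (Set.range fun k : Fin n => flatVec n l α M (arrFlat n l α (F k)))) < n)
    (f0 : Fin n → Fin l) (h0 : LinearIndependent ℂ (fun k => α (f0 k))) :
    ∑ f ∈ Fintype.piFinset (famT α f0), Matrix.det (fun k r => M r (f k)) = 0 := by
  classical
  have harr : ∀ k, arrFlat n l α ((Finset.Ici k).image f0) = famFlag α f0 k := by
    intro k
    ext x
    simp [arrFlat, mem_famFlag, Submodule.mem_iInf]
  have h1 := H (fun k => (Finset.Ici k).image f0)
    (fun k => (congrArg (fun P : Submodule ℂ (Fin (n + 1) → ℂ) => Module.finrank ℂ P)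
      (harr k)).trans (finrank_famFlag α f0 h0 k))
    (fun k k' hk => by
      rw [harr, harr]
      intro x hx
      rw [mem_famFlag] at hx ⊢
      exact fun j hj => hx j (hk.trans hj))
  have he : (fun k => flatVec n l α M (arrFlat n l α ((Finset.Ici k).image f0))) =
      fun k => flatVec n l α M (famFlag α f0 k) := funext fun k => by rw [harr]
  rw [he] at h1
  have h2 := (Matrix.detRowAlternating (R := ℂ) (n := Fin n)).toMultilinearMap.map_sum_finset
    (fun _ i => (fun r => M r i)) (famT α f0)
  have h3 : ∑ f ∈ Fintype.piFinset (famT α f0), Matrix.det (fun k r => M r (f k)) =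
    Matrix.det (fun k => ∑ i ∈ famT α f0 k, (fun r => M r i)) := h2.symm
  rw [h3]
  by_contra hdet
  have hli : LinearIndependent ℂ (fun k => ∑ i ∈ famT α f0 k, (fun r => M r i)) :=
    (Matrix.linearIndependent_rows_iff_isUnit
      (A := Matrix.of (fun k => ∑ i ∈ famT α f0 k, (fun r => M r i)))).2
      ((Matrix.isUnit_iff_isUnit_det _).2 (isUnit_iff_ne_zero.2 hdet))
  have h4 := finrank_span_eq_card hli
  have hle : Submodule.span ℂ (Set.range fun k => ∑ i ∈ famT α f0 k, (fun r => M r i)) ≤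
      Submodule.span ℂ (Set.range fun k : Fin n => flatVec n l α M (famFlag α f0 k)) := by
    rw [Submodule.span_le]
    rintro _ ⟨k, rfl⟩
    simp only [flatVec_sub]
    refine Submodule.sub_mem _ (Submodule.subset_span ⟨k, rfl⟩) ?_
    by_cases hk : (k : ℕ) + 1 < n
    · refine Submodule.subset_span ⟨⟨(k : ℕ) + 1, hk⟩, ?_⟩
      simp only
      congr 1
    · have : famNext α f0 k = ⊤ := by
        rw [eq_top_iff]
        intro x _
        rw [mem_famNext]
        intro j hj
        have h5 : (k : ℕ) < j := hj
        have := j.2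
        omega
      rw [this, flatVec, Finset.filter_false_of_mem]
      · simp
      · intro i _
        rw [top_le_iff, LinearMap.ker_eq_top]; exact hα i
  have h5 := Submodule.finrank_mono hle
  rw [h4, Fintype.card_fin] at h5
  omega

theorem osProj_boundary {m : ℕ} (f : Fin (m + 1) → Fin l)
    (h : ¬ LinearIndependent ℂ (fun k => α (f k))) : osProj n l α (osBoundary l m f) = 0 := by
  have h1 : osRel n l α (osBoundary l m f) 0 := ⟨Or.inl ⟨m, f, h, rfl⟩, rfl⟩
  have h2 := RingQuot.mkAlgHom_rel ℂ h1
  rw [map_zero] at h2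
  exact h2

theorem wedgeMon_cons {m : ℕ} (i : Fin l) (f : Fin m → Fin l) :
    wedgeMon l (m + 1) (Fin.cons i f) = xGen l i * wedgeMon l m f := by
  simp [wedgeMon, List.ofFn_succ]

theorem osBoundary_cons {m : ℕ} (i : Fin l) (f : Fin (m + 1) → Fin l) :
    osBoundary l (m + 1) (Fin.cons i f) =
      wedgeMon l (m + 1) f - xGen l i * osBoundary l m f := by
  have h0 : (Fin.cons i f : Fin (m + 2) → Fin l) ∘ (0 : Fin (m + 2)).succAbove = f := by
    funext k; simp
  have h1 : ∀ j : Fin (m + 1), (Fin.cons i f : Fin (m + 2) → Fin l) ∘ j.succ.succAbove =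
      (Fin.cons i (f ∘ j.succAbove) : Fin (m + 1) → Fin l) := by
    intro j
    funext k
    refine Fin.cases ?_ (fun k => ?_) k <;> simp
  rw [osBoundary, Fin.sum_univ_succ, h0, osBoundary, Finset.mul_sum, sub_eq_add_neg,
    ← Finset.sum_neg_distrib]
  congr 1
  · simp
  · refine Finset.sum_congr rfl fun j _ => ?_
    rw [h1, wedgeMon_cons, mul_smul_comm, Fin.val_succ, pow_succ]
    simp

/-- If `i` is dependent on `f` then `x_f = x_i ∂ x_f`. -/
theorem osProj_wedge {m : ℕ} (i : Fin l) (f : Fin (m + 1) → Fin l)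
    (h : famK α f ≤ LinearMap.ker (α i)) :
    osProj n l α (wedgeMon l (m + 1) f) =
      osProj n l α (xGen l i) * osProj n l α (osBoundary l m f) := by
  have h1 : ¬ LinearIndependent ℂ
      (fun k => α ((Fin.cons i f : Fin (m + 2) → Fin l) k)) := by
    rw [linInd_iff]
    push Not
    refine ⟨0, ?_⟩
    refine le_trans ?_ h
    intro x hx
    rw [mem_famNext] at hx
    rw [mem_famK]
    intro j
    simpa using hx j.succ (Fin.succ_pos j)
  have h2 := osProj_boundary α _ h1
  rw [osBoundary_cons, map_sub, map_mul, sub_eq_zero] at h2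
  exact h2

theorem osProj_dep {m : ℕ} (f : Fin (m + 1) → Fin l)
    (h : ¬ LinearIndependent ℂ (fun k => α (f k))) :
    osProj n l α (wedgeMon l (m + 1) f) = 0 := by
  rw [osProj_wedge α (f 0) f (iInf_le _ 0), osProj_boundary α f h, mul_zero]

theorem linInd_perm {m : ℕ} (f : Fin m → Fin l) (σ : Equiv.Perm (Fin m)) :
    LinearIndependent ℂ (fun k => α ((f ∘ σ) k)) ↔ LinearIndependent ℂ (fun k => α (f k)) :=
  linearIndependent_equiv σ (f := fun k => α (f k))

theorem key_vanish (m : ℕ) : ∀ c : (Fin m → Fin l) → ℂ,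
    (∀ f (σ : Equiv.Perm (Fin m)), c (f ∘ σ) = ((Equiv.Perm.sign σ : ℤ) : ℂ) * c f) →
    (∀ F : Fin m → Submodule ℂ (Fin (n + 1) → ℂ),
      (open Classical in ∑ f ∈ Finset.univ.filter (fun f : Fin m → Fin l =>
        LinearIndependent ℂ (fun k => α (f k)) ∧ famFlag α f = F), c f) = 0) →
    ∑ f, c f • osProj n l α (wedgeMon l m f) = 0 := by
  classical
  induction m with
  | zero =>
    intro c _ h
    have h1 := h default
    rw [Finset.filter_true_of_mem] at h1
    · rw [Fintype.sum_unique] at h1 ⊢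
      rw [h1, zero_smul]
    · intro f _
      exact ⟨linearIndependent_empty_type, Subsingleton.elim _ _⟩
  | succ m ih =>
    intro c hc h
    let cX : Submodule ℂ (Fin (n + 1) → ℂ) → (Fin (m + 1) → Fin l) → ℂ := fun X f =>
      if LinearIndependent ℂ (fun k => α (f k)) ∧ famK α f = X then c f else 0
    have hcX : ∀ X f (σ : Equiv.Perm (Fin (m + 1))),
        cX X (f ∘ σ) = ((Equiv.Perm.sign σ : ℤ) : ℂ) * cX X f := by
      intro X f σ
      simp only [cX, linInd_perm, famK_perm, hc]
      split_ifs <;> simp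
    -- the vanishing of each localized piece
    have hX : ∀ X, ∑ f, cX X f • osProj n l α (wedgeMon l (m + 1) f) = 0 := by
      intro X
      have hbd : ∑ f, cX X f • osProj n l α (osBoundary l m f) = 0 := by
        have hg : ∑ g : Fin m → Fin l, (∑ a, cX X (Fin.cons a g)) •
            osProj n l α (wedgeMon l m g) = 0 := by
          apply ih
          · intro g σ
            rw [Finset.mul_sum]
            refine Finset.sum_congr rfl fun a _ => ?_
            have : (Fin.cons a (g ∘ σ) : Fin (m + 1) → Fin l) =
                (Fin.cons a g : Fin (m + 1) → Fin l) ∘ (Equiv.Perm.decomposeFin.symm (0, σ)) := by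
              funext k
              refine Fin.cases ?_ (fun k => ?_) k <;> simp
            rw [this, hcX]
            simp
          · intro F
            rw [← h (Fin.cons X F), Finset.sum_filter, Finset.sum_filter,
              ← (Fin.consEquiv (fun _ => Fin l)).sum_comp, Fintype.sum_prod_type_right]
            refine Finset.sum_congr rfl fun g _ => ?_
            by_cases hg : LinearIndependent ℂ (fun k => α (g k)) ∧ famFlag α g = F
            · rw [if_pos hg]
              refine Finset.sum_congr rfl fun a _ => ?_
              change (if _ then _ else _) = (if
                LinearIndependent ℂ (fun k => α ((Fin.cons a g : Fin (m + 1) → Fin l) k)) ∧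
                famFlag α (Fin.cons a g : Fin (m + 1) → Fin l) = Fin.cons X F
                then c (Fin.cons a g) else 0)
              refine if_congr ?_ rfl rfl
              rw [famFlag_cons, Fin.cons_inj, hg.2]
              simp
            · rw [if_neg hg]
              symm
              refine Finset.sum_eq_zero fun a _ => ?_
              change (if
                LinearIndependent ℂ (fun k => α ((Fin.cons a g : Fin (m + 1) → Fin l) k)) ∧
                famFlag α (Fin.cons a g : Fin (m + 1) → Fin l) = Fin.cons X F
                then c (Fin.cons a g) else 0) = 0
              refine if_neg ?_
              rintro ⟨h1, h2⟩
              rw [famFlag_cons, Fin.cons_inj] at h2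
              refine hg ⟨?_, h2.2⟩
              simpa [Function.comp_def] using h1.comp Fin.succ (Fin.succ_injective m)
        simp only [osBoundary, map_sum, map_smul, Finset.smul_sum]
        rw [Finset.sum_comm]
        refine Finset.sum_eq_zero fun j _ => ?_
        rw [← (Fin.insertNthEquiv (fun _ => Fin l) j).sum_comp, Fintype.sum_prod_type_right]
        have hj : ∀ (g : Fin m → Fin l) (a : Fin l),
            cX X (j.insertNth a g : Fin (m + 1) → Fin l) =
              (-1 : ℂ) ^ (j : ℕ) * cX X (Fin.cons a g) := by
          intro g a
          rw [← Fin.cons_comp_cycleRange, hcX, Fin.sign_cycleRange]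
          simp
        have hterm : ∀ (g : Fin m → Fin l) (a : Fin l),
            cX X (Fin.insertNthEquiv (fun _ => Fin l) j (a, g)) • (-1 : ℂ) ^ (j : ℕ) •
              osProj n l α (wedgeMon l m
                ((Fin.insertNthEquiv (fun _ => Fin l) j (a, g)) ∘ j.succAbove)) =
            cX X (Fin.cons a g) • osProj n l α (wedgeMon l m g) := by
          intro g a
          have h1 : (Fin.insertNthEquiv (fun _ => Fin l) j (a, g)) ∘ j.succAbove = g := by
            funext k
            simp
          have h2 : cX X (Fin.insertNthEquiv (fun _ => Fin l) j (a, g)) =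
              (-1 : ℂ) ^ (j : ℕ) * cX X (Fin.cons a g) := hj g a
          rw [h1, h2, smul_smul, mul_right_comm, ← mul_pow]
          simp
        rw [← hg]
        refine Finset.sum_congr rfl fun g _ => ?_
        rw [Finset.sum_smul]
        exact Finset.sum_congr rfl fun a _ => hterm g a
      by_cases hex : ∃ f0 : Fin (m + 1) → Fin l, famK α f0 = X
      · obtain ⟨f0, hf0⟩ := hex
        have : ∀ f, cX X f • osProj n l α (wedgeMon l (m + 1) f) =
            osProj n l α (xGen l (f0 0)) * (cX X f • osProj n l α (osBoundary l m f)) := by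
          intro f
          by_cases hf : LinearIndependent ℂ (fun k => α (f k)) ∧ famK α f = X
          · rw [osProj_wedge α (f0 0) f, mul_smul_comm]
            rw [hf.2, ← hf0]
            exact iInf_le _ 0
          · simp [cX, hf]
        simp only [this]
        rw [← Finset.mul_sum, hbd, mul_zero]
      · refine Finset.sum_eq_zero fun f _ => ?_
        have : ¬ (LinearIndependent ℂ (fun k => α (f k)) ∧ famK α f = X) :=
          fun hf => hex ⟨f, hf.2⟩
        simp [cX, this]
    have hsum : ∀ f, c f • osProj n l α (wedgeMon l (m + 1) f) =
        ∑ X ∈ Finset.univ.image (fun f : Fin (m + 1) → Fin l => famK α f),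
          cX X f • osProj n l α (wedgeMon l (m + 1) f) := by
      intro f
      by_cases hf : LinearIndependent ℂ (fun k => α (f k))
      · rw [Finset.sum_eq_single (famK α f)]
        · simp [cX, hf]
        · intro X _ hne
          simp [cX, hne.symm]
        · intro hne
          exact absurd (Finset.mem_image_of_mem _ (Finset.mem_univ f)) hne
      · simp [osProj_dep α f hf]
    simp only [hsum]
    rw [Finset.sum_comm]
    exact Finset.sum_eq_zero fun X _ => hX X

theorem wedge_perm {m : ℕ} (f : Fin m → Fin l) (σ : Equiv.Perm (Fin m)) :
    wedgeMon l m (f ∘ σ) = ((Equiv.Perm.sign σ : ℤ) : ℂ) • wedgeMon l m f := by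
  rw [wedgeMon_eq, wedgeMon_eq]
  have := (ιMulti ℂ m).map_perm (fun k => (Pi.single (f k) (1 : ℂ) : Fin l → ℂ)) σ
  simp only [Function.comp_def] at this ⊢
  rw [this]
  rcases Int.units_eq_one_or (Equiv.Perm.sign σ) with h | h <;> simp [h]

theorem wedge_expand {m : ℕ} (w : Fin m → Fin l → ℂ) :
    (m.factorial : ℂ) • ιMulti ℂ m w =
      ∑ f : Fin m → Fin l, Matrix.det (fun k i => w i (f k)) • wedgeMon l m f := by
  classical
  have h1 : ιMulti ℂ m w = ∑ f : Fin m → Fin l, (∏ i, w i (f i)) • wedgeMon l m f := by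
    have hw : w = fun i => ∑ j, w i j • (Pi.single j (1 : ℂ) : Fin l → ℂ) := by
      funext i
      exact pi_eq_sum_univ' (w i)
    conv_lhs => rw [hw]
    have h2 := (ιMulti ℂ m (M := Fin l → ℂ)).toMultilinearMap.map_sum
      (fun i j => w i j • (Pi.single j (1 : ℂ) : Fin l → ℂ))
    refine h2.trans (Finset.sum_congr rfl fun f _ => ?_)
    rw [wedgeMon_eq]
    exact (ιMulti ℂ m (M := Fin l → ℂ)).toMultilinearMap.map_smul_univ _ _
  have h2 : ∀ σ : Equiv.Perm (Fin m), ιMulti ℂ m w =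
      ∑ f : Fin m → Fin l, (((Equiv.Perm.sign σ : ℤ) : ℂ) * ∏ i, w i (f (σ i))) •
        wedgeMon l m f := by
    intro σ
    rw [h1, ← (Equiv.arrowCongr σ (Equiv.refl (Fin l))).symm.sum_comp]
    refine Finset.sum_congr rfl fun f _ => ?_
    have h3 : (Equiv.arrowCongr σ (Equiv.refl (Fin l))).symm f = f ∘ σ := by
      funext k; simp [Equiv.arrowCongr]
    rw [h3, wedge_perm, smul_smul, mul_comm]
    rfl
  have h3 : ∑ σ : Equiv.Perm (Fin m), ιMulti ℂ m w = (m.factorial : ℂ) • ιMulti ℂ m w := by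
    rw [Finset.sum_const, Finset.card_univ, Fintype.card_perm, Fintype.card_fin,
      Nat.cast_smul_eq_nsmul]
  rw [← h3, Finset.sum_congr rfl fun σ _ => h2 σ, Finset.sum_comm]
  refine Finset.sum_congr rfl fun f _ => ?_
  rw [← Finset.sum_smul]
  congr 1
  exact (Matrix.det_apply' (Matrix.of fun k i => w i (f k))).symm

theorem backward_dir (hα : ∀ i, α i ≠ 0) (M : Matrix (Fin n) (Fin l) ℂ)
    (H : ∀ F : Fin n → Finset (Fin l),
        (∀ k : Fin n, Module.finrank ℂ (arrFlat n l α (F k)) = (k : ℕ) + 1) →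
        (∀ k k' : Fin n, k ≤ k' → arrFlat n l α (F k) ≤ arrFlat n l α (F k')) →
        Module.finrank ℂ (Submodule.span ℂ
          (Set.range fun k : Fin n => flatVec n l α M (arrFlat n l α (F k)))) < n)
    (w : Fin n → (Fin l → ℂ))
    (hw : ∀ i, w i ∈ Submodule.span ℂ (Set.range fun r : Fin n => (M r : Fin l → ℂ))) :
    osProj n l α (ιMulti ℂ n w) = 0 := by
  classical
  have hN : ∀ i, ∃ N : Fin n → ℂ, ∑ r, N r • (M r : Fin l → ℂ) = w i := fun i =>
    (Submodule.mem_span_range_iff_exists_fun ℂ).1 (hw i)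
  choose N hN using hN
  have hdet : ∀ f : Fin n → Fin l, Matrix.det (fun k i => w i (f k)) =
      Matrix.det (fun k r => M r (f k)) * Matrix.det (fun r i => N i r) := by
    intro f
    refine Eq.trans ?_ (Matrix.det_mul (Matrix.of fun k r => M r (f k))
      (Matrix.of fun r i => N i r))
    refine congrArg Matrix.det ?_
    ext k i
    rw [Matrix.mul_apply, ← hN i]
    simp [Finset.sum_apply, mul_comm]
  have hk := key_vanish α n (fun f => Matrix.det (fun k i => w i (f k))) ?_ ?_
  · have h1 := congrArg (osProj n l α) (wedge_expand w)
    rw [map_smul, map_sum] at h1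
    simp only [map_smul] at h1
    rw [hk] at h1
    refine (smul_eq_zero.1 h1).resolve_left ?_
    exact_mod_cast Nat.factorial_ne_zero n
  · intro f σ
    exact Matrix.det_permute σ (fun k i => w i (f k))
  · intro F
    by_cases hex : ∃ f0 : Fin n → Fin l,
        LinearIndependent ℂ (fun k => α (f0 k)) ∧ famFlag α f0 = F
    · obtain ⟨f0, h0, rfl⟩ := hex
      have h1 := flag_sum_zero α hα M H f0 h0
      simp only [hdet]
      rw [← Finset.sum_mul]
      convert zero_mul _
      rw [← h1]
      refine Finset.sum_congr ?_ fun _ _ => rfl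
      ext f
      simp only [Finset.mem_filter, Finset.mem_univ, true_and, Fintype.mem_piFinset]
      exact same_flag_iff α f0 f
    · rw [Finset.filter_false_of_mem, Finset.sum_empty]
      intro f _ hf
      exact hex ⟨f, hf⟩

end Back

end Helpers

/-- Flag condition for isotropic subspaces: the subspace `V ⊆ ℂ^l` (the degree-one part
of the Orlik–Solomon algebra) spanned by the rows of `M` is `n`-isotropic if and only if
for every complete flag `S_n ⊇ ⋯ ⊇ S_1` of flats, the decorating vectors
`v_{S_1},…,v_{S_n}` span a subspace of `ℂ^n` of dimension strictly less than `n`. -/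
theorem stmt_12 (n l : ℕ) (hn : 1 ≤ n)
    (α : Fin l → ((Fin (n + 1) → ℂ) →ₗ[ℂ] ℂ)) (hα : ∀ i, α i ≠ 0)
    (M : Matrix (Fin n) (Fin l) ℂ) :
    ((∀ w : Fin n → (Fin l → ℂ),
        (∀ i, w i ∈ Submodule.span ℂ (Set.range fun r : Fin n => (M r : Fin l → ℂ))) →
        osProj n l α ((List.ofFn fun i : Fin n => ι ℂ (w i)).prod) = 0)
      ↔
      (∀ F : Fin n → Finset (Fin l),
        (∀ k : Fin n, Module.finrank ℂ (arrFlat n l α (F k)) = (k : ℕ) + 1) →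
        (∀ k k' : Fin n, k ≤ k' → arrFlat n l α (F k) ≤ arrFlat n l α (F k')) →
        Module.finrank ℂ (Submodule.span ℂ
          (Set.range fun k : Fin n => flatVec n l α M (arrFlat n l α (F k)))) < n)) := by
  constructor
  · intro h F hF hmono
    have h1 := h (fun i => (M i : Fin l → ℂ)) (fun i => Submodule.subset_span ⟨i, rfl⟩)
    refine forward_dir n l hn α hα M h1 (fun k => arrFlat n l α (F k)) ?_ hmono
    intro hb
    have h2 := hF ⟨0, hn⟩
    have hb' : arrFlat n l α (F ⟨0, hn⟩) = ⊥ := hb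
    rw [hb', finrank_bot] at h2
    simp at h2
  · intro H w hw
    have := backward_dir α hα M H w hw
    rwa [ιMulti_apply] at this

end
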